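/- arXiv:1908.01690 — 2 statements merged into one kernel-verified Lean document; each statement's English description precedes it below -/
import Mathlib

section
/- Let p be a prime with p ≠ 2 and p ≠ 5 satisfying p ≡ ±2 (mod 5), let a and n be positive integers with a odd, p ∤ n, and n ≢ 0 (mod z(p)), and let r = p^a n mod z(p), s = n mod z(p), and A = ⌊n(p^a − 1)/(p^{ν_p(n)}·z(p))⌋. If r < s, then p divides C(p^a n, n)_F. If r ≥ s, then p divides C(p^a n, n)_F if and only if s_p(A) ≥ ((a + 1)/2)(p − 1). -/
/-!
Write `z = z(p)` and `e = ν_p(F_z)`. Lifting the exponent gives `ν_p(F_{zk}) = e + ν_p(k)`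
(`padicValNat_fib_mul`), while `p ∤ F_m` if `z ∤ m`. Hence
`ν_p(F_1 ⋯ F_m) = e ⌊m/z⌋ + ν_p(⌊m/z⌋!)` (`padicValNat_fibonorial`).

Put `K = ⌊n/z⌋` and `M = ⌊p^a n/z⌋`, and note `A = ⌊(p^a - 1) n/z⌋` since `p ∤ n`. If `r < s`, then
`M = A + K + 1` and the Fibonomial coefficient has valuation at least `e ≥ 1`. If `r ≥ s`, then
`M = A + K` and its valuation is that of `M! / (A! K!)`, which by Legendre's formula is
`(s_p(A) + s_p(K) - s_p(M)) / (p - 1)`. As `a` is odd and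
`p ≡ -1 (mod z)` (`prime_dvd_fib_succ`), the base-`p` expansion of `M`
is that of `K` followed by `a` digits alternating between `d = (p + 1) s/z - 1` and
`p - 1 - d` (`odd_pow_mul_div`), so the valuation `v` satisfies
`s_p(A) = (p - 1) v + d + ((a - 1)/2) (p - 1)`. Finally `0 ≤ d < p - 1`, because `r ≥ s` forces
`2 s ≤ z`; so `v ≥ 1` exactly when `s_p(A) ≥ ((a + 1)/2) (p - 1)`.

The Fibonacci identities come from the quadratic ring `R[ω]` with `ω² = 1 + ω`, in which
`ω^(n+1) = F_n + F_(n+1) ω`.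
-/

/-- The Fibonomial coefficient `C(m,k)_F = (F_{m-k+1} ⋯ F_m)/(F_1 ⋯ F_k)`,
with `C(m,0)_F = 1` and `C(m,k)_F = 0` for `k > m`. -/
def fibBinom (m k : ℕ) : ℕ :=
  (∏ i ∈ Finset.range k, Nat.fib (m - i)) / ∏ i ∈ Finset.range k, Nat.fib (i + 1)

/-- The rank of appearance `z(n)`: the least positive `m` with `n ∣ F_m`. -/
noncomputable def fibRank (n : ℕ) : ℕ := sInf {m : ℕ | 0 < m ∧ n ∣ Nat.fib m}

/-- The sum of the digits of `n` in base `q`. -/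
def digitSum (q n : ℕ) : ℕ := (Nat.digits q n).sum

/-! ### Fibonacci numbers in the ring `R[ω]` -/

open QuadraticAlgebra in
lemma omega_pow_succ {R : Type*} [CommRing R] (n : ℕ) :
    (QuadraticAlgebra.omega : QuadraticAlgebra R 1 1) ^ (n + 1) =
      ⟨(Nat.fib n : R), (Nat.fib (n + 1) : R)⟩ := by
  induction n with
  | zero => ext <;> simp
  | succ n ih =>
    rw [pow_succ, ih]
    ext <;> simp [Nat.fib_add_two]

open QuadraticAlgebra in
lemma omega_pow_im {R : Type*} [CommRing R] (n : ℕ) :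
    ((QuadraticAlgebra.omega : QuadraticAlgebra R 1 1) ^ n).im = (Nat.fib n : R) := by
  cases n with
  | zero => simp
  | succ n => rw [omega_pow_succ]

lemma not_isSquare_zmod_five :
    ¬ IsSquare ((2 : ℕ) : ZMod 5) ∧ ¬ IsSquare ((3 : ℕ) : ZMod 5) := by
  decide

/-- The Legendre symbol `(5/p)` is `-1` for `p ≡ ±2 (mod 5)`, by quadratic reciprocity. -/
lemma five_pow_half {p : ℕ} [Fact p.Prime] (hp2 : p ≠ 2) (hmod : p % 5 = 2 ∨ p % 5 = 3) :
    (5 : ZMod p) ^ (p / 2) = -1 := by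
  have : Fact (Nat.Prime 5) := ⟨by norm_num⟩
  have hp5 : p ≠ 5 := by rintro rfl; omega
  have h5 : ((5 : ℕ) : ZMod p) ≠ 0 := by
    rw [Ne, ZMod.natCast_eq_zero_iff]
    intro h
    exact hp5 ((Nat.prime_dvd_prime_iff_eq Fact.out (by norm_num)).1 h)
  have hns : ¬ IsSquare ((5 : ℕ) : ZMod p) := by
    rw [← ZMod.exists_sq_eq_prime_iff_of_mod_four_eq_one (p := 5) (by norm_num) hp2]
    have : ((p : ℕ) : ZMod 5) = ((p % 5 : ℕ) : ZMod 5) := by simp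
    rw [this]
    rcases hmod with h | h <;> rw [h]
    · exact not_isSquare_zmod_five.1
    · exact not_isSquare_zmod_five.2
  rw [ZMod.euler_criterion p h5] at hns
  have := (ZMod.pow_div_two_eq_neg_one_or_one p h5).resolve_left hns
  simpa using this

/-- With `ω² = 1 + ω` over `ZMod p`, the square root `2 ω - 1` of `5` is negated by Frobenius,
so that `ω^(p+1) = -1`, whose `ω`-coordinate is `F_(p+1)`. -/
lemma prime_dvd_fib_succ {p : ℕ} (hp : p.Prime) (hp2 : p ≠ 2)
    (hmod : p % 5 = 2 ∨ p % 5 = 3) : p ∣ Nat.fib (p + 1) := by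
  have : Fact p.Prime := ⟨hp⟩
  have : CharP (QuadraticAlgebra (ZMod p) 1 1) p := charP_of_injective_algebraMap
    (QuadraticAlgebra.algebraMap_injective (a := (1 : ZMod p)) (b := 1)) p
  obtain ⟨w, hw⟩ : ∃ w : QuadraticAlgebra (ZMod p) 1 1, w = QuadraticAlgebra.omega := ⟨_, rfl⟩
  have hw2 : w * w = 1 + w := by
    rw [hw, QuadraticAlgebra.omega_mul_omega_eq_add]; simp
  have h5 : (5 : QuadraticAlgebra (ZMod p) 1 1) ^ (p / 2) = -1 := by
    have := congrArg (algebraMap (ZMod p) (QuadraticAlgebra (ZMod p) 1 1)) (five_pow_half hp2 hmod)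
    simpa only [map_pow, map_ofNat, map_neg, map_one] using this
  have h2p : (2 : QuadraticAlgebra (ZMod p) 1 1) ^ p = 2 := by
    have := congrArg (algebraMap (ZMod p) (QuadraticAlgebra (ZMod p) 1 1)) (ZMod.pow_card (2 : ZMod p))
    simpa only [map_pow, map_ofNat] using this
  have hodd : p = 2 * (p / 2) + 1 := by
    have := hp.eq_two_or_odd; omega
  have e1 : (2 * w - 1) ^ p = -(2 * w - 1) := by
    have : (2 * w - 1) ^ 2 = 5 := by linear_combination 4 * hw2
    calc (2 * w - 1) ^ p = (2 * w - 1) ^ (2 * (p / 2) + 1) := by rw [← hodd]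
      _ = -(2 * w - 1) := by rw [pow_succ, pow_mul, this, h5]; ring
  rw [sub_pow_char, mul_pow, h2p, one_pow] at e1
  have e2 : 2 * w ^ (p + 1) = -2 := by
    rw [pow_succ]; linear_combination w * e1 - 2 * hw2
  have e3 := congrArg QuadraticAlgebra.im e2
  rw [hw, QuadraticAlgebra.im_mul, omega_pow_im, QuadraticAlgebra.im_neg,
    QuadraticAlgebra.re_ofNat, QuadraticAlgebra.im_ofNat] at e3
  have h2 : (2 : ZMod p) ≠ 0 := by
    have : ((2 : ℕ) : ZMod p) ≠ 0 := by
      rw [Ne, ZMod.natCast_eq_zero_iff]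
      intro h
      exact hp2 ((Nat.prime_dvd_prime_iff_eq hp (by norm_num)).1 h)
    simpa using this
  rw [← ZMod.natCast_eq_zero_iff]
  simpa [h2] using e3

/-- `F_{(u+1)k} ≡ k F_{u+1} F_u^{k-1}` modulo `F_{u+1}²`, from the binomial expansion of
`(F_u + F_{u+1} ω)^k`. -/
lemma fib_mul_expand (u k : ℕ) : ∃ c : ℤ, (Nat.fib ((u + 1) * k) : ℤ) =
    Nat.fib (u + 1) * (k * (Nat.fib u : ℤ) ^ (k - 1) + Nat.fib (u + 1) * c) := by
  set w : QuadraticAlgebra ℤ 1 1 := QuadraticAlgebra.omega with hw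
  have h0 : w ^ (u + 1) = (Nat.fib u : ℤ) + (Nat.fib (u + 1) : ℤ) * w := by
    rw [hw, omega_pow_succ]
    ext <;> simp
  obtain ⟨c, hc⟩ := Polynomial.powAddExpansion
    ((Nat.fib u : ℤ) : QuadraticAlgebra ℤ 1 1) ((Nat.fib (u + 1) : ℤ) * w) k
  rw [← h0, ← pow_mul] at hc
  refine ⟨(c * w ^ 2).im, ?_⟩
  have := congrArg QuadraticAlgebra.im hc
  rw [hw, omega_pow_im, ← hw] at this
  have e : ((Nat.fib u : ℤ) : QuadraticAlgebra ℤ 1 1) ^ k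
      + (k : QuadraticAlgebra ℤ 1 1) * ((Nat.fib u : ℤ) : QuadraticAlgebra ℤ 1 1) ^ (k - 1)
        * ((Nat.fib (u + 1) : ℤ) * w)
      + c * ((Nat.fib (u + 1) : ℤ) * w) ^ 2 =
      (((Nat.fib u : ℤ) ^ k : ℤ) : QuadraticAlgebra ℤ 1 1)
      + ((k * (Nat.fib u : ℤ) ^ (k - 1) * Nat.fib (u + 1) : ℤ) : QuadraticAlgebra ℤ 1 1) * w
      + (((Nat.fib (u + 1) : ℤ) ^ 2 : ℤ) : QuadraticAlgebra ℤ 1 1) * (c * w ^ 2) := by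
    push_cast; ring
  rw [e] at this
  simp only [QuadraticAlgebra.im_add, QuadraticAlgebra.im_mul, QuadraticAlgebra.im_intCast,
    QuadraticAlgebra.re_intCast, hw, QuadraticAlgebra.omega_im, QuadraticAlgebra.omega_re] at this
  rw [Int.cast_id] at this
  simp only [Int.cast_id] at this
  simp only [QuadraticAlgebra.im_mul, hw]
  linear_combination this

/-- `F_{(u+1)p} ≡ p F_{u+1} F_u^{p-1}` modulo `p² F_{u+1}` when `p` is odd and divides `F_{u+1}`. -/
lemma fib_mul_prime_expand (u p : ℕ) (hp : Odd p) (hd : p ∣ Nat.fib (u + 1)) :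
    ∃ c : ℤ, (Nat.fib ((u + 1) * p) : ℤ) =
    Nat.fib (u + 1) * (p * ((Nat.fib u : ℤ) ^ (p - 1) + p * c)) := by
  obtain ⟨b, hb⟩ := hd
  set w : QuadraticAlgebra ℤ 1 1 := QuadraticAlgebra.omega with hw
  have h0 : w ^ (u + 1) = (Nat.fib u : ℤ) + p * ((b : ℤ) * w) := by
    rw [hw, omega_pow_succ, hb]
    ext <;> simp
  obtain ⟨c, hc⟩ := odd_sq_dvd_geom_sum₂_sub
    ((Nat.fib u : ℤ) : QuadraticAlgebra ℤ 1 1) ((b : ℤ) * w) hp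
  have hg := geom_sum₂_mul ((Nat.fib u : ℤ) + p * ((b : ℤ) * w))
    ((Nat.fib u : ℤ) : QuadraticAlgebra ℤ 1 1) p
  rw [sub_eq_iff_eq_add.1 hc, ← h0, ← pow_mul, h0] at hg
  refine ⟨(c * w).im, ?_⟩
  have e : w ^ ((u + 1) * p) = (((Nat.fib u : ℤ) ^ p : ℤ) : QuadraticAlgebra ℤ 1 1)
      + ((p * (b : ℤ) * p * (Nat.fib u : ℤ) ^ (p - 1) : ℤ) : QuadraticAlgebra ℤ 1 1) * w
      + ((p * (b : ℤ) * p ^ 2 : ℤ) : QuadraticAlgebra ℤ 1 1) * (c * w) := by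
    push_cast at hg ⊢
    linear_combination -hg
  have := congrArg QuadraticAlgebra.im e
  rw [hw, omega_pow_im, ← hw] at this
  simp only [QuadraticAlgebra.im_add, QuadraticAlgebra.im_mul, QuadraticAlgebra.im_intCast,
    QuadraticAlgebra.re_intCast, hw, QuadraticAlgebra.omega_im, QuadraticAlgebra.omega_re] at this
  simp only [Int.cast_id] at this
  simp only [QuadraticAlgebra.im_mul, hw, QuadraticAlgebra.omega_im, QuadraticAlgebra.omega_re]
  rw [hb]
  push_cast at this ⊢
  linear_combination this

/-! ### Valuations of Fibonacci numbers -/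

lemma padicValNat_fib_mul_of_not_dvd {p N k : ℕ} [Fact p.Prime] (hN : 0 < N)
    (hd : p ∣ Nat.fib N) (hk : ¬ p ∣ k) :
    padicValNat p (Nat.fib (N * k)) = padicValNat p (Nat.fib N) := by
  have hp : p.Prime := Fact.out
  have hk0 : k ≠ 0 := by rintro rfl; simp at hk
  obtain ⟨u, rfl⟩ := Nat.exists_eq_add_of_le' hN
  have hu : ¬ p ∣ Nat.fib u := fun h =>
    hp.one_lt.ne' (Nat.dvd_one.1 ((Nat.fib_coprime_fib_succ u) ▸ Nat.dvd_gcd h hd))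
  obtain ⟨c, hc⟩ := fib_mul_expand u k
  obtain ⟨q, hq⟩ := Nat.fib_dvd _ _ (Dvd.intro k rfl : u + 1 ∣ (u + 1) * k)
  have hf0 : Nat.fib (u + 1) ≠ 0 := (Nat.fib_pos.2 hN).ne'
  have hq2 : (q : ℤ) = k * (Nat.fib u : ℤ) ^ (k - 1) + Nat.fib (u + 1) * c := by
    rw [hq] at hc
    push_cast at hc
    exact mul_left_cancel₀ (by exact_mod_cast hf0) hc
  have hpq : ¬ p ∣ q := by
    intro h
    have h1 : (p : ℤ) ∣ k * (Nat.fib u : ℤ) ^ (k - 1) := by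
      have h2 : (p : ℤ) ∣ q := by exact_mod_cast h
      rw [hq2] at h2
      exact (dvd_add_left (Dvd.dvd.mul_right (by exact_mod_cast hd) c)).1 h2
    have h3 : p ∣ k * (Nat.fib u) ^ (k - 1) := by exact_mod_cast h1
    rcases hp.dvd_mul.1 h3 with h | h
    · exact hk h
    · exact hu (hp.dvd_of_dvd_pow h)
  have hq0 : q ≠ 0 := by rintro rfl; simp at hpq
  rw [hq, padicValNat.mul hf0 hq0, padicValNat.eq_zero_of_not_dvd hpq, add_zero]

lemma padicValNat_fib_mul_prime {p N : ℕ} [Fact p.Prime] (hp2 : p ≠ 2) (hN : 0 < N)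
    (hd : p ∣ Nat.fib N) :
    padicValNat p (Nat.fib (N * p)) = padicValNat p (Nat.fib N) + 1 := by
  have hp : p.Prime := Fact.out
  obtain ⟨u, rfl⟩ := Nat.exists_eq_add_of_le' hN
  have hu : ¬ p ∣ Nat.fib u := fun h =>
    hp.one_lt.ne' (Nat.dvd_one.1 ((Nat.fib_coprime_fib_succ u) ▸ Nat.dvd_gcd h hd))
  obtain ⟨c, hc⟩ := fib_mul_prime_expand u p (hp.odd_of_ne_two hp2) hd
  obtain ⟨q, hq⟩ := Nat.fib_dvd _ _ (Dvd.intro p rfl : u + 1 ∣ (u + 1) * p)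
  have hf0 : Nat.fib (u + 1) ≠ 0 := (Nat.fib_pos.2 hN).ne'
  have hq2 : (q : ℤ) = p * ((Nat.fib u : ℤ) ^ (p - 1) + p * c) := by
    rw [hq] at hc
    push_cast at hc
    exact mul_left_cancel₀ (by exact_mod_cast hf0) hc
  have hpq : p ∣ q := by
    have : (p : ℤ) ∣ q := hq2 ▸ dvd_mul_right _ _
    exact_mod_cast this
  obtain ⟨t, rfl⟩ := hpq
  have ht : (t : ℤ) = (Nat.fib u : ℤ) ^ (p - 1) + p * c := by
    push_cast at hq2
    exact mul_left_cancel₀ (by exact_mod_cast hp.ne_zero) hq2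
  have hpt : ¬ p ∣ t := by
    intro h
    have h1 : (p : ℤ) ∣ (Nat.fib u : ℤ) ^ (p - 1) := by
      have h2 : (p : ℤ) ∣ t := by exact_mod_cast h
      rw [ht] at h2
      exact (dvd_add_left (dvd_mul_right _ c)).1 h2
    have h3 : p ∣ (Nat.fib u) ^ (p - 1) := by exact_mod_cast h1
    exact hu (hp.dvd_of_dvd_pow h3)
  have ht0 : t ≠ 0 := by rintro rfl; simp at hpt
  rw [hq, padicValNat.mul hf0 (mul_ne_zero hp.ne_zero ht0), padicValNat.mul hp.ne_zero ht0,
    padicValNat.eq_zero_of_not_dvd hpt, padicValNat_self]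

/-- Lifting the exponent for Fibonacci numbers at an odd prime. -/
lemma padicValNat_fib_mul {p N k : ℕ} [Fact p.Prime] (hp2 : p ≠ 2) (hN : 0 < N) (hk : k ≠ 0)
    (hd : p ∣ Nat.fib N) :
    padicValNat p (Nat.fib (N * k)) = padicValNat p (Nat.fib N) + padicValNat p k := by
  have hp : p.Prime := Fact.out
  obtain ⟨j, m, hm, rfl⟩ := Nat.exists_eq_pow_mul_and_not_dvd hk p hp.ne_one
  have hm0 : m ≠ 0 := by rintro rfl; simp at hm
  rw [padicValNat.mul (pow_ne_zero _ hp.ne_zero) hm0, padicValNat.prime_pow,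
    padicValNat.eq_zero_of_not_dvd hm, add_zero]
  clear hk
  induction j with
  | zero => simpa using padicValNat_fib_mul_of_not_dvd hN hd hm
  | succ j ih =>
    have e : N * (p ^ (j + 1) * m) = N * (p ^ j * m) * p := by ring
    rw [e, padicValNat_fib_mul_prime hp2
      (Nat.mul_pos hN (Nat.mul_pos (pow_pos hp.pos _) (Nat.pos_of_ne_zero hm0)))
      (hd.trans (Nat.fib_dvd _ _ (Dvd.intro _ rfl))), ih]
    ring

/-! ### Fibonorials and the rank of appearance -/

/-- The fibonorial `F_1 ⋯ F_m`. -/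
def fibonorial (m : ℕ) : ℕ := ∏ i ∈ Finset.range m, Nat.fib (i + 1)

lemma fibonorial_succ (m : ℕ) : fibonorial (m + 1) = fibonorial m * Nat.fib (m + 1) := by
  simp [fibonorial, Finset.prod_range_succ]

lemma fibonorial_ne_zero (m : ℕ) : fibonorial m ≠ 0 :=
  Finset.prod_ne_zero_iff.2 fun i _ => (Nat.fib_pos.2 i.succ_pos).ne'

/-- Integrality of the Fibonomial coefficients, by the recursion
`F_(j+k+2) = F_(j+1) F_(k+2) + F_j F_(k+1)`. -/
lemma fibonorial_mul_dvd (j k : ℕ) : fibonorial j * fibonorial k ∣ fibonorial (j + k) := by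
  induction h : j + k generalizing j k with
  | zero =>
    obtain ⟨rfl, rfl⟩ : j = 0 ∧ k = 0 := by omega
    simp [fibonorial]
  | succ N ih =>
    rcases j with _ | j
    · have : k = N + 1 := by omega
      simp [this, fibonorial]
    rcases k with _ | k
    · have : j = N := by omega
      simp [this, fibonorial]
    have hN : N = j + k + 1 := by omega
    have h1 := ih j (k + 1) (by omega)
    have h2 := ih (j + 1) k (by omega)
    have e : fibonorial (N + 1) = Nat.fib (j + 1) * fibonorial N * Nat.fib (k + 2)
        + Nat.fib (k + 1) * fibonorial N * Nat.fib j := by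
      rw [fibonorial_succ, hN, show j + k + 1 + 1 = j + (k + 1) + 1 by ring, Nat.fib_add]
      ring
    rw [e]
    refine dvd_add (Dvd.dvd.mul_right ?_ _) (Dvd.dvd.mul_right ?_ _)
    · rw [fibonorial_succ j, mul_comm (fibonorial j), mul_assoc]
      exact mul_dvd_mul_left _ h1
    · rw [fibonorial_succ k, ← mul_assoc, mul_comm _ (Nat.fib (k + 1))]
      exact mul_dvd_mul_left _ h2

lemma fibBinom_mul (j k : ℕ) :
    fibBinom (j + k) k * (fibonorial j * fibonorial k) = fibonorial (j + k) := by
  have h : (∏ i ∈ Finset.range k, Nat.fib (j + k - i)) * fibonorial j = fibonorial (j + k) := by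
    induction k with
    | zero => simp
    | succ k ih =>
      rw [Finset.prod_range_succ', ← add_assoc, fibonorial_succ, ← ih]
      simp only [Nat.add_sub_add_right, Nat.sub_zero]
      ring
  have hd : fibonorial k ∣ ∏ i ∈ Finset.range k, Nat.fib (j + k - i) := by
    refine (mul_dvd_mul_iff_right (fibonorial_ne_zero j)).1 ?_
    rw [h, mul_comm]
    exact fibonorial_mul_dvd j k
  have : fibBinom (j + k) k = (∏ i ∈ Finset.range k, Nat.fib (j + k - i)) / fibonorial k := rfl
  rw [this, mul_comm (fibonorial j), ← mul_assoc, Nat.div_mul_cancel hd, h]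

lemma fibRank_spec {p M : ℕ} (hM : 0 < M) (hd : p ∣ Nat.fib M) :
    0 < fibRank p ∧ p ∣ Nat.fib (fibRank p) :=
  Nat.sInf_mem (s := {m : ℕ | 0 < m ∧ p ∣ Nat.fib m}) ⟨M, hM, hd⟩

lemma fibRank_dvd {p m : ℕ} (hm : 0 < m) (hd : p ∣ Nat.fib m) : fibRank p ∣ m := by
  obtain ⟨h0, h1⟩ := fibRank_spec hm hd
  have h2 : p ∣ Nat.fib (Nat.gcd (fibRank p) m) := by
    rw [Nat.fib_gcd]; exact Nat.dvd_gcd h1 hd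
  have h3 : fibRank p ≤ Nat.gcd (fibRank p) m := Nat.sInf_le ⟨Nat.gcd_pos_of_pos_left _ h0, h2⟩
  exact (Nat.le_antisymm (Nat.gcd_le_left _ h0) h3) ▸ Nat.gcd_dvd_right _ _

open scoped Nat in
/-- A Legendre formula for the fibonorial: only the indices divisible by `z(p)` contribute. -/
lemma padicValNat_fibonorial {p : ℕ} [Fact p.Prime] (hp2 : p ≠ 2) (hz : 0 < fibRank p)
    (hd : p ∣ Nat.fib (fibRank p)) (m : ℕ) :
    padicValNat p (fibonorial m) =
      padicValNat p (Nat.fib (fibRank p)) * (m / fibRank p) + padicValNat p (m / fibRank p)! := by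
  induction m with
  | zero => simp [fibonorial]
  | succ m ih =>
    rw [fibonorial_succ, padicValNat.mul (fibonorial_ne_zero m) (Nat.fib_pos.2 m.succ_pos).ne', ih,
      Nat.succ_div]
    split_ifs with h
    · have h2 : (m + 1) = fibRank p * (m / fibRank p + 1) := by
        have := Nat.succ_div (a := m) (b := fibRank p)
        rw [if_pos h] at this
        rw [← this, Nat.mul_div_cancel' h]
      have h3 : padicValNat p (Nat.fib (m + 1)) =
          padicValNat p (Nat.fib (fibRank p)) + padicValNat p (m / fibRank p + 1) := by
        conv_lhs => rw [h2]
        exact padicValNat_fib_mul hp2 hz (Nat.succ_ne_zero _) hd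
      rw [h3, Nat.factorial_succ, padicValNat.mul (Nat.succ_ne_zero _) (Nat.factorial_ne_zero _)]
      ring
    · have h3 : padicValNat p (Nat.fib (m + 1)) = 0 :=
        padicValNat.eq_zero_of_not_dvd fun h' => h (fibRank_dvd m.succ_pos h')
      rw [h3]; simp

/-! ### Base-`p` digits -/

lemma digitSum_add_mul {p d x : ℕ} (hp : 1 < p) (hd : d < p) :
    digitSum p (p * x + d) = digitSum p x + d := by
  unfold digitSum
  by_cases h : d ≠ 0 ∨ x ≠ 0
  · rw [add_comm, Nat.digits_add p hp d x hd h]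
    simp [add_comm]
  · push Not at h
    simp [h.1, h.2]

open scoped Nat in
/-- Legendre's formula. -/
lemma factorial_digitSum {p : ℕ} [Fact p.Prime] (m : ℕ) :
    (p - 1) * padicValNat p m ! + digitSum p m = m := by
  rw [sub_one_mul_padicValNat_factorial, digitSum]
  exact Nat.sub_add_cancel (Nat.digit_sum_le p m)

lemma quot_rem_unique {z x y r r' : ℕ} (h : z * x + r = z * y + r') (hr : r < z) (hr' : r' < z) :
    x = y ∧ r = r' := by
  have hz : 0 < z := by omega
  have hxy : x = y := by
    have := congrArg (· / z) h
    simpa [Nat.mul_add_div hz, Nat.div_eq_of_lt hr, Nat.div_eq_of_lt hr'] using this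
  subst hxy
  exact ⟨rfl, by omega⟩

/-- If `p + 1 = z q` and `n = z K + s` with `0 < s < z`, then `⌊p^(2b+1) n / z⌋` is `K` followed by
base-`p` digits alternating between `q s - 1` and `p - q s`, starting and ending with `q s - 1`. -/
lemma odd_pow_mul_div {p z q s K : ℕ} (hp : 1 < p) (hz : p + 1 = z * q) (hs0 : 0 < s) (hsz : s < z)
    (b : ℕ) : ∃ M, p ^ (2 * b + 1) * (z * K + s) = z * M + (z - s) ∧
      digitSum p M = digitSum p K + (q * s - 1) + b * (p - 1) := by
  have hq0 : 0 < q := by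
    rcases Nat.eq_zero_or_pos q with rfl | h
    · simp at hz
    · exact h
  have h1 : 1 ≤ q * s := Nat.mul_pos hq0 hs0
  have h2 : q * s ≤ p := by nlinarith
  obtain ⟨d, hd⟩ := Nat.exists_eq_add_of_le' h1
  obtain ⟨d', hd'⟩ := Nat.exists_eq_add_of_le h2
  obtain ⟨t, ht⟩ := Nat.exists_eq_add_of_le hsz.le
  have hts : z - s = t := by omega
  have e1 : p * s = z * d + t := by
    zify at *; linear_combination s * hz + z * hd + ht
  have e2 : p * t = z * d' + s := by
    zify at *; linear_combination -p * ht - e1 + z * hd' + z * hd + ht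
  rw [hts]
  induction b with
  | zero =>
    refine ⟨p * K + d, by simp; linear_combination e1, ?_⟩
    rw [digitSum_add_mul hp (by omega)]
    omega
  | succ b ih =>
    obtain ⟨M, hM, hD⟩ := ih
    refine ⟨p * (p * M + d') + d, ?_, ?_⟩
    · rw [show 2 * (b + 1) + 1 = (2 * b + 1) + 2 by ring, pow_add]
      linear_combination p ^ 2 * hM + p * e2 + e1
    · rw [digitSum_add_mul hp (by omega), digitSum_add_mul hp (by omega), hD, add_mul]
      omega

/-! ### The valuation of the Fibonomial coefficient -/

theorem prime_dvd_fibonomial_pm_two_a_odd_not_dvd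
    (p a n : ℕ) (hp : p.Prime) (hp2 : p ≠ 2) (hp5 : p ≠ 5)
    (ha : 0 < a) (hn : 0 < n) (haodd : Odd a)
    (hmod : p % 5 = 2 ∨ p % 5 = 3)
    (hpn : ¬ p ∣ n) (hns : ¬ fibRank p ∣ n)
    (r s A : ℕ)
    (hr : r = p ^ a * n % fibRank p)
    (hs : s = n % fibRank p)
    (hA : A = n * (p ^ a - 1) / (p ^ padicValNat p n * fibRank p)) :
    (r < s → p ∣ fibBinom (p ^ a * n) n) ∧
    (s ≤ r → (p ∣ fibBinom (p ^ a * n) n ↔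
      ((a + 1) / 2) * (p - 1) ≤ digitSum p A)) := by
  have : Fact p.Prime := ⟨hp⟩
  have hp3 : 3 ≤ p := by have := hp.two_le; omega
  have hd1 := prime_dvd_fib_succ hp hp2 hmod
  obtain ⟨hz0, hzd⟩ := fibRank_spec p.succ_pos hd1
  obtain ⟨q, hq⟩ : fibRank p ∣ p + 1 := fibRank_dvd p.succ_pos hd1
  have hv := padicValNat_fibonorial hp2 hz0 hzd
  have he : 1 ≤ padicValNat p (Nat.fib (fibRank p)) :=
    one_le_padicValNat_of_dvd (Nat.fib_pos.2 hz0).ne' hzd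
  rw [padicValNat.eq_zero_of_not_dvd hpn, pow_zero, one_mul] at hA
  set z := fibRank p with hzdef
  set e := padicValNat p (Nat.fib z) with hedef
  have hpa : 1 ≤ p ^ a := Nat.one_le_pow _ _ hp.pos
  have hm : p ^ a * n = n * (p ^ a - 1) + n := by
    obtain ⟨c, hc⟩ := Nat.exists_eq_add_of_le' hpa
    rw [hc, Nat.add_sub_cancel]; ring
  have hs0 : 0 < s := by
    rw [hs]; exact Nat.pos_of_ne_zero fun h => hns (Nat.dvd_of_mod_eq_zero h)
  have hsz : s < z := hs ▸ Nat.mod_lt _ hz0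
  have hnK : z * (n / z) + s = n := by rw [hs]; exact Nat.div_add_mod n z
  obtain ⟨b, hb⟩ := haodd
  obtain ⟨M, hM, hMD⟩ := odd_pow_mul_div (K := n / z) hp.one_lt hq hs0 hsz b
  rw [hnK, ← hb] at hM
  have hr' : r = z - s := by
    rw [hr, hM, Nat.mul_add_mod, Nat.mod_eq_of_lt (by omega)]
  have hMdiv : p ^ a * n / z = M := by
    rw [hM, Nat.mul_add_div hz0, Nat.div_eq_of_lt (by omega), add_zero]
  have hbin := fibBinom_mul (n * (p ^ a - 1)) n
  rw [← hm] at hbin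
  have hB0 : fibBinom (p ^ a * n) n ≠ 0 := by
    intro h
    rw [h, zero_mul] at hbin
    exact fibonorial_ne_zero _ hbin.symm
  have hval := congrArg (padicValNat p) hbin
  rw [padicValNat.mul hB0 (mul_ne_zero (fibonorial_ne_zero _) (fibonorial_ne_zero _)),
    padicValNat.mul (fibonorial_ne_zero _) (fibonorial_ne_zero _), hv, hv, hv, hMdiv, ← hA] at hval
  have hdvd : p ∣ fibBinom (p ^ a * n) n ↔ 1 ≤ padicValNat p (fibBinom (p ^ a * n) n) :=
    dvd_iff_padicValNat_ne_zero hB0 |>.trans Nat.one_le_iff_ne_zero.symm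
  rw [hdvd]
  set v := padicValNat p (fibBinom (p ^ a * n) n)
  set K := n / z
  have hAmod : z * A + n * (p ^ a - 1) % z = n * (p ^ a - 1) := by
    rw [hA]; exact Nat.div_add_mod _ z
  have htz := Nat.mod_lt (n * (p ^ a - 1)) hz0
  set t := n * (p ^ a - 1) % z
  have hsum : z * M + r = z * (A + K) + (t + s) := by
    rw [hr', mul_add]; linarith
  constructor
  · intro hrs
    -- the floors lose a unit, which contributes `e`
    have hM1 : M = A + K + 1 := by
      rcases lt_or_ge (t + s) z with h | h
      · have := (quot_rem_unique hsum (by omega) h).2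
        omega
      · refine (quot_rem_unique (z := z) (r := r) (r' := t + s - z) ?_ (by omega) (by omega)).1
        rw [hsum, mul_add z (A + K) 1]
        omega
    have hfac : padicValNat p (A.factorial) + padicValNat p (K.factorial)
        ≤ padicValNat p (M.factorial) := by
      rw [← padicValNat.mul (Nat.factorial_ne_zero _) (Nat.factorial_ne_zero _)]
      refine padicValNat_dvd_iff_le (Nat.factorial_ne_zero M) |>.1 (dvd_trans pow_padicValNat_dvd ?_)
      exact (Nat.factorial_mul_factorial_dvd_factorial_add A K).trans
        (Nat.factorial_dvd_factorial (by omega))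
    rw [hM1] at hval hfac
    rw [mul_add, mul_add] at hval
    omega
  · intro hrs
    have hM1 : M = A + K := by
      rcases lt_or_ge (t + s) z with h | h
      · exact (quot_rem_unique hsum (by omega) h).1
      · have h2 : z * M + r = z * (A + K + 1) + (t + s - z) := by
          rw [hsum, mul_add z (A + K) 1]
          omega
        have := (quot_rem_unique h2 (by omega) (by omega)).2
        omega
    rw [show e * M = e * A + e * K by rw [hM1]; ring] at hval
    have hval' : v + padicValNat p A.factorial + padicValNat p K.factorial
        = padicValNat p M.factorial := by omega
    have f1 := factorial_digitSum (p := p) A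
    have f2 := factorial_digitSum (p := p) K
    have f3 := factorial_digitSum (p := p) M
    rw [hMD, ← hval', mul_add, mul_add] at f3
    have hq1 : 1 ≤ q * s := by
      refine Nat.mul_pos (Nat.pos_of_ne_zero ?_) hs0
      rintro rfl
      simp at hq
    have hq2 : 2 * (q * s) ≤ p + 1 := by
      rw [hq]
      calc 2 * (q * s) = 2 * s * q := by ring
        _ ≤ z * q := Nat.mul_le_mul_right q (by omega)
    have key : digitSum p A = (p - 1) * v + (q * s - 1) + b * (p - 1) := by omega
    have hb2 : (a + 1) / 2 = b + 1 := by omega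
    rw [key, hb2, add_mul]
    constructor
    · intro h
      have := Nat.mul_le_mul_left (p - 1) h
      omega
    · intro h
      by_contra! h0
      have : v = 0 := by omega
      rw [this] at h
      omega
end

section
/- For all integers 0 ≤ k ≤ m, the 5-adic valuation of the Fibonomial coefficient equals that of the binomial coefficient: ν_5( C(m,k)_F ) = ν_5( binomial(m,k) ). -/
/-- Cassini's identity, squared so that the sign disappears. -/
lemma fib_cassini_sq (n : ℕ) :
    ((Nat.fib (n + 1) : ℤ) ^ 2 - Nat.fib n * Nat.fib (n + 1) - (Nat.fib n : ℤ) ^ 2) ^ 2 = 1 := by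
  induction n with
  | zero => simp
  | succ n ih =>
    rw [Nat.fib_add_two (n := n)]
    push_cast
    linear_combination ih

lemma fib_add_int (m n : ℕ) : (Nat.fib (m + n) : ℤ) =
    Nat.fib m * Nat.fib (n + 1) + Nat.fib (m + 1) * Nat.fib n - Nat.fib m * Nat.fib n := by
  have h1 := Nat.fib_add m n
  have h2 := Nat.fib_add m (n + 1)
  have h3 := Nat.fib_add_two (n := m + n)
  have h4 := Nat.fib_add_two (n := n)
  have e : m + (n + 1) + 1 = m + n + 2 := by ring
  rw [e, show n + 1 + 1 = n + 2 from rfl] at h2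
  zify at h1 h2 h3 h4
  linear_combination h2 - h1 - h3 + (Nat.fib (m + 1) : ℤ) * h4

/-- The cofactor of `5 F_n` is `1` modulo 5, so passing from `n` to `5n` raises the 5-adic
valuation of `F_n` by exactly 1. -/
lemma fib_five_mul (n : ℕ) : ∃ c : ℤ, (Nat.fib (5 * n) : ℤ) = 5 * Nat.fib n * (5 * c + 1) := by
  have e : 5 * n = (n + n) + (n + n) + n := by ring
  have h2 := fib_add_int n n
  have h2' := Nat.fib_add n n
  have h4 := fib_add_int (n + n) (n + n)
  have h4' := Nat.fib_add (n + n) (n + n)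
  have h5 := fib_add_int (n + n + (n + n)) n
  have hq := fib_cassini_sq n
  zify at h2' h4'
  rw [e, h5, h4, h4', h2, h2']
  generalize (Nat.fib n : ℤ) = a at *
  generalize (Nat.fib (n + 1) : ℤ) = b at *
  refine ⟨a ^ 4 + (b ^ 2 - a * b - a ^ 2) * a ^ 2, ?_⟩
  linear_combination 5 * a * hq

lemma padicValNat_five_fib (n : ℕ) (hn : 0 < n) :
    padicValNat 5 (Nat.fib n) = padicValNat 5 n := by
  have : Fact (Nat.Prime 5) := ⟨by norm_num⟩
  induction n using Nat.strong_induction_on with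
  | _ n ih =>
    by_cases h : 5 ∣ n
    · obtain ⟨t, rfl⟩ := h
      have ht : 0 < t := by omega
      obtain ⟨c, hc⟩ := fib_five_mul t
      have hF : 0 < Nat.fib t := Nat.fib_pos.2 ht
      have hF5 : 0 < Nat.fib (5 * t) := Nat.fib_pos.2 hn
      -- Positivity of both Fibonacci numbers lets the cofactor be read as a natural number.
      have hpos : 0 < 5 * c + 1 := by
        have h1 : (0 : ℤ) < 5 * Nat.fib t := by positivity
        have h2 : (0 : ℤ) < Nat.fib (5 * t) := by exact_mod_cast hF5
        rw [hc] at h2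
        exact pos_of_mul_pos_right h2 h1.le
      lift c to ℕ using by omega
      have hc' : Nat.fib (5 * t) = 5 * Nat.fib t * (5 * c + 1) := by exact_mod_cast hc
      rw [hc', padicValNat.mul (by positivity) (by positivity),
        padicValNat.mul (by norm_num) hF.ne', padicValNat.mul (by norm_num) ht.ne',
        ih t (by omega) ht, padicValNat.eq_zero_of_not_dvd (n := 5 * c + 1) (by omega)]
      rfl
    · have hg : Nat.gcd n 5 = 1 :=
        (((Nat.Prime.coprime_iff_not_dvd (by norm_num)).2 h).symm : Nat.Coprime n 5)
      have h5 := Nat.fib_gcd n 5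
      rw [hg, show Nat.fib 5 = 5 from rfl, Nat.fib_one] at h5
      have hnd : ¬ 5 ∣ Nat.fib n :=
        (Nat.Prime.coprime_iff_not_dvd (by norm_num)).1 (Nat.Coprime.symm h5.symm)
      rw [padicValNat.eq_zero_of_not_dvd h, padicValNat.eq_zero_of_not_dvd hnd]

lemma padicValNat_five_prod_fib (f : ℕ → ℕ) (k : ℕ) (hf : ∀ i < k, 0 < f i) :
    padicValNat 5 (∏ i ∈ Finset.range k, Nat.fib (f i)) =
      padicValNat 5 (∏ i ∈ Finset.range k, f i) := by
  have : Fact (Nat.Prime 5) := ⟨by norm_num⟩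
  induction k with
  | zero => simp
  | succ k ih =>
    have hlt : ∀ i ∈ Finset.range k, 0 < f i := fun i hi =>
      hf i (by have := Finset.mem_range.1 hi; omega)
    have hk := hf k (by omega)
    rw [Finset.prod_range_succ, Finset.prod_range_succ,
      padicValNat.mul (Finset.prod_pos fun i hi => Nat.fib_pos.2 (hlt i hi)).ne'
        (Nat.fib_pos.2 hk).ne',
      padicValNat.mul (Finset.prod_pos hlt).ne' hk.ne',
      ih fun i hi => hf i (by omega), padicValNat_five_fib _ hk]

/-- The Fibonacci factorial `F_1 F_2 ⋯ F_n`. -/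
def fibFactorial (n : ℕ) : ℕ := ∏ i ∈ Finset.range n, Nat.fib (i + 1)

lemma fibFactorial_succ (n : ℕ) : fibFactorial (n + 1) = fibFactorial n * Nat.fib (n + 1) :=
  Finset.prod_range_succ _ _

lemma fibFactorial_pos (n : ℕ) : 0 < fibFactorial n :=
  Finset.prod_pos fun i _ => Nat.fib_pos.2 i.succ_pos

/-- Integrality of the Fibonomial coefficients. -/
lemma fibFactorial_mul_dvd (a b : ℕ) :
    fibFactorial a * fibFactorial b ∣ fibFactorial (a + b) := by
  induction a generalizing b with
  | zero => simp [fibFactorial]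
  | succ a iha =>
    induction b with
    | zero => simp [fibFactorial]
    | succ b ihb =>
      have h1 := iha (b + 1)
      have e1 : a + (b + 1) = a + 1 + b := by ring
      rw [e1] at h1
      rw [← Nat.add_assoc, fibFactorial_succ (a + 1 + b), Nat.fib_add (a + 1) b, Nat.mul_add]
      refine dvd_add ?_ ?_
      · rw [fibFactorial_succ a, mul_right_comm, ← mul_assoc]
        exact Dvd.dvd.mul_right (Nat.mul_dvd_mul_right h1 _) _
      · rw [fibFactorial_succ b, ← mul_assoc, mul_comm (Nat.fib (a + 1 + 1)), ← mul_assoc]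
        exact Dvd.dvd.mul_right (Nat.mul_dvd_mul_right ihb _) _

lemma prod_fib_mul_fibFactorial (a k : ℕ) :
    (∏ i ∈ Finset.range k, Nat.fib (a + k - i)) * fibFactorial a = fibFactorial (a + k) := by
  induction k with
  | zero => simp
  | succ k ih =>
    rw [Finset.prod_range_succ', ← Nat.add_assoc, fibFactorial_succ, ← ih]
    simp only [Nat.add_sub_add_right, Nat.sub_zero]
    ring

lemma fibFactorial_dvd_prod (m k : ℕ) (hkm : k ≤ m) :
    (∏ i ∈ Finset.range k, Nat.fib (i + 1)) ∣ ∏ i ∈ Finset.range k, Nat.fib (m - i) := by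
  obtain ⟨a, rfl⟩ := Nat.exists_eq_add_of_le' hkm
  have h := fibFactorial_mul_dvd a k
  rw [← prod_fib_mul_fibFactorial, mul_comm] at h
  exact Nat.dvd_of_mul_dvd_mul_right (fibFactorial_pos a) h

theorem five_adic_valuation_fibonomial_eq_choose (m k : ℕ) (hkm : k ≤ m) :
    padicValNat 5 (fibBinom m k) = padicValNat 5 (Nat.choose m k) := by
  have : Fact (Nat.Prime 5) := ⟨by norm_num⟩
  rw [fibBinom, padicValNat.div_of_dvd (fibFactorial_dvd_prod m k hkm),
    padicValNat_five_prod_fib _ k fun i hi => by omega,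
    padicValNat_five_prod_fib _ k fun i _ => i.succ_pos,
    Nat.choose_eq_descFactorial_div_factorial,
    padicValNat.div_of_dvd (Nat.factorial_dvd_descFactorial m k),
    Nat.descFactorial_eq_prod_range, Finset.prod_range_add_one_eq_factorial]
end
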